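/- arXiv:math/0609757 — 3 statements merged into one kernel-verified Lean document; each statement's English description precedes it below -/
import Mathlib

section
/- Let G be a finite simple graph, let u and v be adjacent vertices of G each of degree at most 3, and let L be a list assignment with |L(w)| ≥ 3 for every vertex w. If the graph G − {u, v} (the subgraph induced on V(G) \ {u, v}) admits an (L,1)*-coloring, then G admits an (L,1)*-coloring. -/
/-- An `(L,1)*`-coloring of `G`: every vertex gets a color from its list, and
each vertex has at most one neighbor receiving its own color. -/
def IsL1StarColoring {V α : Type*} (G : SimpleGraph V) (L : V → Finset α)
    (φ : V → α) : Prop :=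
  (∀ v, φ v ∈ L v) ∧
    ∀ v u w, G.Adj v u → G.Adj v w → φ u = φ v → φ w = φ v → u = w

/-!
Besides each other, `u` and `v` have at most two neighbors each, so each of their lists contains a
color that appears on none of these. Such a choice creates no monochromatic edge between `{u, v}`
and the rest of the graph, so the old and the new colors do not interact; and inside `{u, v}` every
coloring is admissible, since there each vertex has a single neighbor.
-/

section

variable {V α : Type*} {G : SimpleGraph V} {L : V → Finset α} {s : Set V}

theorem isL1StarColoring_of_subsingleton_neighborSet {φ : V → α}
    (hG : ∀ w, (G.neighborSet w).Subsingleton) (hφ : ∀ w, φ w ∈ L w) :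
    IsL1StarColoring G L φ :=
  ⟨hφ, fun w _ _ hx hy _ _ => hG w hx hy⟩

theorem IsL1StarColoring.of_induce_of_induce_compl {χ : V → α}
    (hs : IsL1StarColoring (G.induce s) (fun w => L w) (fun w => χ w))
    (hsc : IsL1StarColoring (G.induce sᶜ) (fun w => L w) (fun w => χ w))
    (hcut : ∀ x ∈ s, ∀ y ∉ s, G.Adj x y → χ x ≠ χ y) :
    IsL1StarColoring G L χ := by
  have mem_iff_mem {x y : V} (hxy : G.Adj x y) (hχ : χ y = χ x) : y ∈ s ↔ x ∈ s :=
    ⟨fun hy => by_contra fun hx => hcut y hy x hx hxy.symm hχ,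
      fun hx => by_contra fun hy => hcut x hx y hy hxy hχ.symm⟩
  refine ⟨fun w => ?_, fun x y z hxy hxz hy hz => ?_⟩
  · by_cases hw : w ∈ s
    · exact hs.1 ⟨w, hw⟩
    · exact hsc.1 ⟨w, hw⟩
  · have hys := mem_iff_mem hxy hy
    have hzs := mem_iff_mem hxz hz
    by_cases hx : x ∈ s
    · exact congrArg Subtype.val
        (hs.2 ⟨x, hx⟩ ⟨y, hys.2 hx⟩ ⟨z, hzs.2 hx⟩ hxy hxz hy hz)
    · exact congrArg Subtype.val
        (hsc.2 ⟨x, hx⟩ ⟨y, mt hys.1 hx⟩ ⟨z, mt hzs.1 hx⟩ hxy hxz hy hz)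

theorem exists_mem_finset_notMem_image_of_encard_lt {β : Type*} (f : β → α) {t : Set β}
    {S : Finset α} (h : t.encard < S.card) : ∃ c ∈ S, c ∉ f '' t := by
  by_contra! hS
  have hle : (S : Set α).encard ≤ t.encard :=
    (Set.encard_le_encard hS).trans (Set.encard_image_le f t)
  rw [Set.encard_coe_eq_coe_finsetCard] at hle
  exact hle.not_gt h

theorem IsL1StarColoring.exists_extension {φ : s → α}
    (hφ : IsL1StarColoring (G.induce s) (fun w => L w) φ)
    (hsc : ∀ w, ((G.induce sᶜ).neighborSet w).Subsingleton)
    (hL : ∀ w ∉ s, {x : s | G.Adj w x}.encard < (L w).card) :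
    ∃ χ : V → α, IsL1StarColoring G L χ ∧ ∀ w : s, χ w = φ w := by
  classical
  choose c hcL hc using fun w hw => exists_mem_finset_notMem_image_of_encard_lt φ (hL w hw)
  let χ : V → α := fun w => if hw : w ∈ s then φ ⟨w, hw⟩ else c w hw
  have hχ_mem (w : V) (hw : w ∈ s) : χ w = φ ⟨w, hw⟩ := dif_pos hw
  have hχ_notMem (w : V) (hw : w ∉ s) : χ w = c w hw := dif_neg hw
  have hχφ (w : s) : χ w = φ w := hχ_mem w w.2
  refine ⟨χ, .of_induce_of_induce_compl (s := s) (by simpa only [hχφ] using hφ) ?_ ?_, hχφ⟩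
  · refine isL1StarColoring_of_subsingleton_neighborSet hsc fun w => ?_
    rw [hχ_notMem w w.2]
    exact hcL w w.2
  · intro x hx y hy hxy hχ
    rw [hχ_mem x hx, hχ_notMem y hy] at hχ
    exact hc y hy ⟨⟨x, hx⟩, hxy.symm, hχ⟩

theorem encard_adj_lt_degree_of_adj_notMem {a b : V} [Fintype (G.neighborSet a)]
    (hab : G.Adj a b) (hb : b ∉ s) : {x : s | G.Adj a x}.encard < G.degree a := by
  have hssub : Subtype.val '' {x : s | G.Adj a x} ⊂ G.neighborSet a := by
    refine (Set.ssubset_iff_of_subset ?_).2 ⟨b, hab, ?_⟩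
    · rintro _ ⟨x, hx, rfl⟩
      exact hx
    · rintro ⟨x, -, rfl⟩
      exact hb x.2
  rw [← Subtype.val_injective.encard_image, ← G.card_neighborFinset_eq_degree,
    ← Set.encard_coe_eq_coe_finsetCard, G.coe_neighborFinset]
  exact ((G.neighborSet a).toFinite.subset hssub.subset).encard_lt_encard hssub

theorem subsingleton_neighborSet_induce_of_subset_pair {u v : V} (hs : s ⊆ {u, v}) (w : s) :
    ((G.induce s).neighborSet w).Subsingleton := by
  intro x hx y hy
  have eq_or_eq (z : s) : z.1 = u ∨ z.1 = v := hs z.2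
  grind [hx.ne, hy.ne]

theorem stmt_1_general {u v : V} [Fintype (G.neighborSet u)] [Fintype (G.neighborSet v)]
    (huv : G.Adj u v) (hu : G.degree u ≤ (L u).card) (hv : G.degree v ≤ (L v).card)
    {φ : {w : V | w ≠ u ∧ w ≠ v} → α}
    (hφ : IsL1StarColoring (G.induce {w : V | w ≠ u ∧ w ≠ v}) (fun w => L w) φ) :
    ∃ χ : V → α, IsL1StarColoring G L χ ∧ ∀ w : {w : V | w ≠ u ∧ w ≠ v}, χ w = φ w := by
  have eq_or_eq {w : V} (hw : w ∉ {w : V | w ≠ u ∧ w ≠ v}) : w = u ∨ w = v := by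
    simpa [or_iff_not_imp_left] using hw
  refine hφ.exists_extension
    (subsingleton_neighborSet_induce_of_subset_pair fun _ hw => eq_or_eq hw) fun w hw => ?_
  obtain rfl | rfl := eq_or_eq hw
  · exact (encard_adj_lt_degree_of_adj_notMem huv (by simp)).trans_le (mod_cast hu)
  · exact (encard_adj_lt_degree_of_adj_notMem huv.symm (by simp)).trans_le (mod_cast hv)

end

/-- If `u` and `v` are adjacent vertices each of degree at most 3, all lists
have size at least 3, and `G - {u, v}` admits an `(L,1)*`-coloring, then so
does `G`. -/
theorem stmt_1 {V α : Type*} [Fintype V] [DecidableEq V]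
    (G : SimpleGraph V) [DecidableRel G.Adj] (u v : V) (huv : G.Adj u v)
    (hu : G.degree u ≤ 3) (hv : G.degree v ≤ 3)
    (L : V → Finset α) (hL : ∀ w, 3 ≤ (L w).card)
    (h : ∃ φ : {w : V | w ≠ u ∧ w ≠ v} → α,
      IsL1StarColoring (G.induce {w : V | w ≠ u ∧ w ≠ v}) (fun w => L w.1) φ) :
    ∃ φ : V → α, IsL1StarColoring G L φ := by
  obtain ⟨φ, hφ⟩ := h
  exact (stmt_1_general huv (hu.trans (hL u)) (hv.trans (hL v)) hφ).imp fun _ hχ => hχ.1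
end

section
/- Let G be a finite simple graph containing a triangle on vertices x, y, z such that x has degree 3 and y and z each have degree 4 in G, and let L be a list assignment with |L(w)| ≥ 3 for every vertex w. If the graph G − {x, y, z} (the subgraph induced on V(G) \ {x, y, z}) admits an (L,1)*-coloring, then G admits an (L,1)*-coloring. -/
section

variable {V α : Type*} {G : SimpleGraph V} {L : V → Finset α} {φ : V → α}

theorem isL1StarColoring_of_induce_of_induce_compl {s : Set V}
    (hs : IsL1StarColoring (G.induce s) (fun v => L v) (fun v => φ v))
    (hsc : IsL1StarColoring (G.induce sᶜ) (fun v => L v) (fun v => φ v))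
    (hcross : ∀ v ∈ s, ∀ u ∉ s, G.Adj v u → φ u ≠ φ v) :
    IsL1StarColoring G L φ := by
  refine ⟨fun v => ?_, fun v u w hvu hvw hu hw => ?_⟩
  · by_cases hv : v ∈ s
    · exact hs.1 ⟨v, hv⟩
    · exact hsc.1 ⟨v, hv⟩
  · by_cases hv : v ∈ s
    · have mem_of_mono {t : V} (hvt : G.Adj v t) (ht : φ t = φ v) : t ∈ s :=
        by_contra fun hts => hcross v hv t hts hvt ht
      exact congrArg Subtype.val <| hs.2 ⟨v, hv⟩ ⟨u, mem_of_mono hvu hu⟩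
        ⟨w, mem_of_mono hvw hw⟩ hvu hvw hu hw
    · have notMem_of_mono {t : V} (hvt : G.Adj v t) (ht : φ t = φ v) : t ∉ s :=
        fun hts => hcross t hts v hv hvt.symm ht.symm
      exact congrArg Subtype.val <| hsc.2 ⟨v, hv⟩ ⟨u, notMem_of_mono hvu hu⟩
        ⟨w, notMem_of_mono hvw hw⟩ hvu hvw hu hw

theorem isL1StarColoring_induce_triple_of_ne {x y z : V}
    (hx : φ x ∈ L x) (hy : φ y ∈ L y) (hz : φ z ∈ L z) (hxy : φ x ≠ φ y) :
    IsL1StarColoring (G.induce {x, y, z}) (fun v => L v) (fun v => φ v) := by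
  refine ⟨?_, ?_⟩
  · rintro ⟨v, rfl | rfl | rfl⟩ <;> assumption
  · -- If `u ≠ w`, then `v`, `u`, `w` are `x`, `y`, `z` in some order, all of the same color.
    rintro ⟨v, hv⟩ ⟨u, hu⟩ ⟨w, hw⟩ hvu hvw huv hwv
    have hvu_ne : v ≠ u := G.ne_of_adj hvu
    have hvw_ne : v ≠ w := G.ne_of_adj hvw
    simp only [Set.mem_insert_iff, Set.mem_singleton_iff] at hv hu hw
    grind

theorem exists_mem_forall_adj_ne {v : V} [Fintype (G.neighborSet v)] (φ : V → α) {A : Finset α}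
    {W : Finset V} (hW : ∀ w ∈ W, G.Adj v w) (hcard : G.degree v < A.card + W.card) :
    ∃ a ∈ A, ∀ u, G.Adj v u → u ∉ W → φ u ≠ a := by
  classical
  have hWN : W ⊆ G.neighborFinset v := fun w hw => (G.mem_neighborFinset v w).2 (hW w hw)
  have hsdiff : (G.neighborFinset v \ W).card + W.card = G.degree v := by
    rw [Finset.card_sdiff_add_card_eq_card hWN, G.card_neighborFinset_eq_degree]
  have hlt : ((G.neighborFinset v \ W).image φ).card < A.card :=
    Finset.card_image_le.trans_lt (by omega)
  obtain ⟨a, haA, ha⟩ := Finset.exists_mem_notMem_of_card_lt_card hlt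
  refine ⟨a, haA, fun u hvu huW hua => ha (Finset.mem_image.2 ⟨u, ?_, hua⟩)⟩
  exact Finset.mem_sdiff.2 ⟨(G.mem_neighborFinset v u).2 hvu, huW⟩

theorem exists_triangle_colors {x y z : V} [Fintype (G.neighborSet x)]
    [Fintype (G.neighborSet y)] [Fintype (G.neighborSet z)]
    (hxy : G.Adj x y) (hyz : G.Adj y z) (hxz : G.Adj x z)
    (hdx : G.degree x ≤ (L x).card) (hdy : G.degree y ≤ (L y).card + 1)
    (hdz : G.degree z ≤ (L z).card + 1) (φ : V → α) :
    ∃ a ∈ L x, ∃ b ∈ L y, ∃ c ∈ L z, a ≠ b ∧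
      ∀ u ∉ ({x, y, z} : Set V),
        (G.Adj x u → φ u ≠ a) ∧ (G.Adj y u → φ u ≠ b) ∧ (G.Adj z u → φ u ≠ c) := by
  classical
  obtain ⟨b, hbL, hb⟩ := exists_mem_forall_adj_ne (G := G) (v := y) φ (A := L y) (W := {x, z})
    (by simp [hxy.symm, hyz]) (by rw [Finset.card_pair hxz.ne]; omega)
  obtain ⟨c, hcL, hc⟩ := exists_mem_forall_adj_ne (G := G) (v := z) φ (A := L z) (W := {x, y})
    (by simp [hxz.symm, hyz.symm]) (by rw [Finset.card_pair hxy.ne]; omega)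
  obtain ⟨a, haL, ha⟩ := exists_mem_forall_adj_ne (G := G) (v := x) (Function.update φ y b)
    (A := L x) (W := {z}) (by simp [hxz]) (by rw [Finset.card_singleton]; omega)
  have hba : b ≠ a := by simpa using ha y hxy (by simp [hyz.ne])
  refine ⟨a, haL, b, hbL, c, hcL, hba.symm, fun u hu => ?_⟩
  simp only [Set.mem_insert_iff, Set.mem_singleton_iff, not_or] at hu
  obtain ⟨hux, huy, huz⟩ := hu
  exact ⟨fun h => by simpa [huy] using ha u h (by simp [huz]),
    fun h => hb u h (by simp [hux, huz]), fun h => hc u h (by simp [hux, huy])⟩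

theorem stmt_2_general {x y z : V} [Fintype (G.neighborSet x)]
    [Fintype (G.neighborSet y)] [Fintype (G.neighborSet z)]
    (hxy : G.Adj x y) (hyz : G.Adj y z) (hxz : G.Adj x z)
    (hdx : G.degree x ≤ (L x).card) (hdy : G.degree y ≤ (L y).card + 1)
    (hdz : G.degree z ≤ (L z).card + 1)
    (h : ∃ φ : ({x, y, z}ᶜ : Set V) → α,
      IsL1StarColoring (G.induce {x, y, z}ᶜ) (fun v => L v) φ) :
    ∃ φ : V → α, IsL1StarColoring G L φ := by
  classical
  obtain ⟨φ, hφ⟩ := h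
  have hLx : (L x).Nonempty :=
    Finset.card_pos.1 (((G.degree_pos_iff_exists_adj x).2 ⟨y, hxy⟩).trans_le hdx)
  have : Nonempty α := hLx.to_type
  obtain ⟨φ, rfl⟩ := Subtype.exists_pi_extension (α := fun _ => α) φ
  obtain ⟨a, haL, b, hbL, c, hcL, hab, havoid⟩ :=
    exists_triangle_colors hxy hyz hxz hdx hdy hdz φ
  obtain ⟨ψ, hψx, hψy, hψz, hψ⟩ : ∃ ψ : V → α, ψ x = a ∧ ψ y = b ∧ ψ z = c ∧
      ∀ u ∉ ({x, y, z} : Set V), ψ u = φ u :=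
    ⟨fun v => if v = x then a else if v = y then b else if v = z then c else φ v,
      by grind [hxy.ne, hxz.ne, hyz.ne]⟩
  refine ⟨ψ, isL1StarColoring_of_induce_of_induce_compl (s := {x, y, z}) ?_ ?_ ?_⟩
  · subst a b c
    exact isL1StarColoring_induce_triple_of_ne haL hbL hcL hab
  · convert hφ using 2 with v
    exact hψ v v.2
  · rintro v (rfl | rfl | rfl) u hu hvu
    · rw [hψ u hu, hψx]
      exact (havoid u hu).1 hvu
    · rw [hψ u hu, hψy]
      exact (havoid u hu).2.1 hvu
    · rw [hψ u hu, hψz]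
      exact (havoid u hu).2.2 hvu

end

/-- If `G` contains a triangle `x y z` with `deg x = 3`, `deg y = deg z = 4`,
all lists have size at least 3, and `G - {x, y, z}` admits an
`(L,1)*`-coloring, then so does `G`. -/
theorem stmt_2 {V α : Type*} [Fintype V] [DecidableEq V]
    (G : SimpleGraph V) [DecidableRel G.Adj] (x y z : V)
    (hxy : G.Adj x y) (hyz : G.Adj y z) (hxz : G.Adj x z)
    (hdx : G.degree x = 3) (hdy : G.degree y = 4) (hdz : G.degree z = 4)
    (L : V → Finset α) (hL : ∀ w, 3 ≤ (L w).card)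
    (h : ∃ φ : {w : V | w ∉ ({x, y, z} : Set V)} → α,
      IsL1StarColoring (G.induce {w : V | w ∉ ({x, y, z} : Set V)})
        (fun w => L w.1) φ) :
    ∃ φ : V → α, IsL1StarColoring G L φ :=
  stmt_2_general hxy hyz hxz (hdx.trans_le (hL x))
    (hdy.trans_le (Nat.succ_le_succ (hL y))) (hdz.trans_le (Nat.succ_le_succ (hL z))) h
end

section
/- Let G be a finite simple graph containing a 4-cycle on vertices x, y, z, u (with edges xy, yz, zu, ux) such that x and z each have degree 3 and y and u each have degree 4 in G, and let L be a list assignment with |L(w)| ≥ 3 for every vertex w. If the graph G − {x, y, z, u} (the subgraph induced on V(G) \ {x, y, z, u}) admits an (L,1)*-coloring, then G admits an (L,1)*-coloring. -/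
section Degree

variable {V : Type*} {G : SimpleGraph V} {v s t r : V} [Fintype (G.neighborSet v)]

lemma one_lt_degree_of_adj (hs : G.Adj v s) (ht : G.Adj v t) (hst : s ≠ t) : 1 < G.degree v :=
  Finset.one_lt_card.2 ⟨s, by simpa using hs, t, by simpa using ht, hst⟩

lemma two_lt_degree_of_adj (hs : G.Adj v s) (ht : G.Adj v t) (hr : G.Adj v r)
    (hst : s ≠ t) (hsr : s ≠ r) (htr : t ≠ r) : 2 < G.degree v :=
  Finset.two_lt_card.2
    ⟨s, by simpa using hs, t, by simpa using ht, r, by simpa using hr, hst, hsr, htr⟩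

end Degree

section Residual

variable {V α : Type*} {G : SimpleGraph V} {L : V → Finset α} {S : Set V}

lemma degree_induce_add_card_subtype_notMem [DecidablePred (· ∈ S)] (v : S)
    [Fintype (G.neighborSet v)] [Fintype ((G.induce S).neighborSet v)] :
    (G.induce S).degree v + ((G.neighborFinset v).subtype (· ∉ S)).card = G.degree v := by
  have inside : (G.induce S).neighborFinset v = (G.neighborFinset v).subtype (· ∈ S) := by
    ext w
    simp
  rw [← SimpleGraph.card_neighborFinset_eq_degree, inside, Finset.card_subtype,
    Finset.card_subtype, Finset.card_filter_add_card_filter_not,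
    SimpleGraph.card_neighborFinset_eq_degree]

open Classical in
/-- The residual list of `v ∈ S`, given a coloring `φ` of the vertices outside `S`: the colors of
`L v` that `φ` does not use on any neighbor of `v`. -/
noncomputable def residualList (G : SimpleGraph V) (L : V → Finset α) (φ : ↥Sᶜ → α) (v : S) :
    Finset α :=
  {c ∈ L v | ∀ w : ↥Sᶜ, G.Adj v w → φ w ≠ c}

lemma card_add_degree_induce_le (φ : ↥Sᶜ → α) (v : S) [Fintype (G.neighborSet v)]
    [Fintype ((G.induce S).neighborSet v)] :
    (L v).card + (G.induce S).degree v ≤ (residualList G L φ v).card + G.degree v := by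
  classical
  let outside : Finset ↥Sᶜ := (G.neighborFinset v).subtype (· ∉ S)
  have degree_eq : (G.induce S).degree v + outside.card = G.degree v :=
    degree_induce_add_card_subtype_notMem v
  have sdiff_subset : L v \ outside.image φ ⊆ residualList G L φ v := by
    intro c hc
    obtain ⟨hcL, hcφ⟩ := Finset.mem_sdiff.1 hc
    refine Finset.mem_filter.2 ⟨hcL, fun w hvw hwc => hcφ (Finset.mem_image.2 ⟨w, ?_, hwc⟩)⟩
    simpa [outside] using hvw
  have card_le : (L v).card ≤ (residualList G L φ v).card + outside.card :=
    calc (L v).card ≤ (L v \ outside.image φ).card + (outside.image φ).card :=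
          Finset.card_le_card_sdiff_add_card
      _ ≤ (residualList G L φ v).card + outside.card :=
          Nat.add_le_add (Finset.card_le_card sdiff_subset) Finset.card_image_le
  omega

lemma residualList_nonempty (φ : ↥Sᶜ → α) {v s t : S} [Fintype (G.neighborSet v)]
    (hs : G.Adj v s) (ht : G.Adj v t) (hst : (s : V) ≠ t) (hv : G.degree v ≤ (L v).card + 1) :
    (residualList G L φ v).Nonempty := by
  have : Fintype ((G.induce S).neighborSet v) :=
    ((G.neighborSet v).toFinite.preimage Subtype.val_injective.injOn).fintype
  have two_le : 1 < (G.induce S).degree v :=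
    one_lt_degree_of_adj (s := s) (t := t) hs ht (Subtype.coe_ne_coe.1 hst)
  have := card_add_degree_induce_le (G := G) (L := L) φ v
  exact Finset.card_pos.1 (by omega)

open Classical in
theorem IsL1StarColoring.glue {φ : ↥Sᶜ → α} {ψ : S → α}
    (hφ : IsL1StarColoring (G.induce Sᶜ) (fun w => L w) φ)
    (hψ : IsL1StarColoring (G.induce S) (residualList G L φ) ψ) :
    IsL1StarColoring G L (fun v => if hv : v ∈ S then ψ ⟨v, hv⟩ else φ ⟨v, hv⟩) := by
  have mem_residual (v : S) := Finset.mem_filter.1 (hψ.1 v)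
  have cross (v : S) (w : ↥Sᶜ) (hvw : G.Adj v w) : φ w ≠ ψ v := (mem_residual v).2 w hvw
  set χ : V → α := fun v => if hv : v ∈ S then ψ ⟨v, hv⟩ else φ ⟨v, hv⟩
  have χ_mem (v : S) : χ v = ψ v := dif_pos v.2
  have χ_notMem (v : ↥Sᶜ) : χ v = φ v := dif_neg v.2
  have same_side {v w : V} (hvw : G.Adj v w) (hχ : χ w = χ v) : w ∈ S ↔ v ∈ S := by
    by_cases hv : v ∈ S <;> by_cases hw : w ∈ S <;> simp only [hv, hw]
    · exact (cross ⟨v, hv⟩ ⟨w, hw⟩ hvw (by rwa [← χ_mem, ← χ_notMem])).elim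
    · exact (cross ⟨w, hw⟩ ⟨v, hv⟩ hvw.symm (by rw [← χ_mem, ← χ_notMem, hχ])).elim
  refine ⟨fun v => ?_, fun v p q hp hq hpv hqv => ?_⟩
  · by_cases hv : v ∈ S
    · exact χ_mem ⟨v, hv⟩ ▸ (mem_residual ⟨v, hv⟩).1
    · exact χ_notMem ⟨v, hv⟩ ▸ hφ.1 ⟨v, hv⟩
  · have hpS := same_side hp hpv
    have hqS := same_side hq hqv
    by_cases hv : v ∈ S
    · lift v to S using hv
      lift p to S using hpS.2 v.2
      lift q to S using hqS.2 v.2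
      rw [χ_mem, χ_mem] at hpv hqv
      exact congrArg Subtype.val (hψ.2 v p q hp hq hpv hqv)
    · lift v to ↥Sᶜ using hv
      lift p to ↥Sᶜ using mt hpS.1 v.2
      lift q to ↥Sᶜ using mt hqS.1 v.2
      rw [χ_notMem, χ_notMem] at hpv hqv
      exact congrArg Subtype.val (hφ.2 v p q hp hq hpv hqv)

end Residual

section FourVertices

variable {V α : Type*} {G : SimpleGraph V} {L : V → Finset α}

lemma isL1StarColoring_of_two_pairs {φ : V → α} {p q r s : V}
    (hV : ∀ v, v = p ∨ v = q ∨ v = r ∨ v = s) (hφ : ∀ v, φ v ∈ L v)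
    (hpr : G.Adj p r → φ p ≠ φ r) (hps : G.Adj p s → φ p ≠ φ s)
    (hqr : G.Adj q r → φ q ≠ φ r) (hqs : G.Adj q s → φ q ≠ φ s) :
    IsL1StarColoring G L φ := by
  suffices partner : ∀ v, ∃ m, ∀ w, G.Adj v w → φ w = φ v → w = m by
    refine ⟨hφ, fun v t w ht hw htv hwv => ?_⟩
    obtain ⟨m, hm⟩ := partner v
    exact (hm t ht htv).trans (hm w hw hwv).symm
  intro v
  rcases hV v with rfl | rfl | rfl | rfl
  · exact ⟨q, fun w hw hφw => by grind [hV w, hw.ne]⟩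
  · exact ⟨p, fun w hw hφw => by grind [hV w, hw.ne]⟩
  · exact ⟨s, fun w hw hφw => by grind [hV w, hw.ne, hw.symm]⟩
  · exact ⟨r, fun w hw hφw => by grind [hV w, hw.ne, hw.symm]⟩

lemma exists_forall_mem_and_eq {p q r s : V} (hV : ∀ v, v = p ∨ v = q ∨ v = r ∨ v = s)
    (hne : [p, q, r, s].Nodup) {a b c d : α}
    (ha : a ∈ L p) (hb : b ∈ L q) (hc : c ∈ L r) (hd : d ∈ L s) :
    ∃ φ : V → α, (∀ v, φ v ∈ L v) ∧ φ p = a ∧ φ q = b ∧ φ r = c ∧ φ s = d := by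
  classical
  let φ (v : V) : α := if v = p then a else if v = q then b else if v = r then c else d
  have values : φ p = a ∧ φ q = b ∧ φ r = c ∧ φ s = d := by grind
  refine ⟨φ, fun v => ?_, values⟩
  rcases hV v with rfl | rfl | rfl | rfl <;> grind

theorem exists_isL1StarColoring_of_fourCycle [G.LocallyFinite] {x y z u : V}
    (hV : ∀ v, v = x ∨ v = y ∨ v = z ∨ v = u)
    (hxy : G.Adj x y) (hyz : G.Adj y z) (hzu : G.Adj z u) (hux : G.Adj u x)
    (hxz : x ≠ z) (hyu : y ≠ u)
    (hx : G.degree x ≤ (L x).card) (hz : G.degree z ≤ (L z).card)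
    (hy : (L y).Nonempty) (hu : (L u).Nonempty) :
    ∃ φ : V → α, IsL1StarColoring G L φ := by
  classical
  have two_le_x : 1 < (L x).card := (one_lt_degree_of_adj hxy hux.symm hyu).trans_le hx
  have two_le_z : 1 < (L z).card := (one_lt_degree_of_adj hyz.symm hzu hyu).trans_le hz
  have hne : [x, y, z, u].Nodup := by
    simp [hxy.ne, hxz, hux.ne', hyz.ne, hyu, hzu.ne]
  obtain ⟨a, ha⟩ := hy
  obtain ⟨b, hb⟩ := hu
  by_cases h : G.Adj x z ∨ a = b
  · have pair_lt : Finset.card {a, b} < (L x).card ∧ Finset.card {a, b} < (L z).card := by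
      rcases h with chord | rfl
      · have := two_lt_degree_of_adj chord hxy hux.symm hyz.ne' hzu.ne hyu
        have := two_lt_degree_of_adj chord.symm hyz.symm hzu hxy.ne hux.ne' hyu
        have := Finset.card_le_two (a := a) (b := b)
        omega
      · simp [two_le_x, two_le_z]
    obtain ⟨c, hc, hcab⟩ := Finset.exists_mem_notMem_of_card_lt_card pair_lt.1
    obtain ⟨d, hd, hdab⟩ := Finset.exists_mem_notMem_of_card_lt_card pair_lt.2
    obtain ⟨φ, hφ, rfl, rfl, rfl, rfl⟩ := exists_forall_mem_and_eq hV hne hc ha hd hb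
    obtain ⟨hca, hcb⟩ : φ x ≠ φ y ∧ φ x ≠ φ u := by simpa using hcab
    obtain ⟨hda, hdb⟩ : φ z ≠ φ y ∧ φ z ≠ φ u := by simpa using hdab
    exact ⟨φ, isL1StarColoring_of_two_pairs (p := x) (q := z) (r := y) (s := u)
      (fun v => by have := hV v; tauto) hφ
      (fun _ => hca) (fun _ => hcb) (fun _ => hda) (fun _ => hdb)⟩
  · obtain ⟨no_chord, hab'⟩ := not_or.1 h
    obtain ⟨c, hc, hca⟩ := Finset.exists_mem_ne two_le_x a
    obtain ⟨d, hd, hdb⟩ := Finset.exists_mem_ne two_le_z b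
    obtain ⟨φ, hφ, rfl, rfl, rfl, rfl⟩ := exists_forall_mem_and_eq hV hne hc ha hd hb
    exact ⟨φ, isL1StarColoring_of_two_pairs (p := x) (q := u) (r := y) (s := z)
      (fun v => by have := hV v; tauto) hφ
      (fun _ => hca) (absurd · no_chord) (fun _ => Ne.symm hab') (fun _ => hdb.symm)⟩

end FourVertices

theorem stmt_3_general {V α : Type*} (G : SimpleGraph V) [G.LocallyFinite] (x y z u : V)
    (hxy : G.Adj x y) (hyz : G.Adj y z) (hzu : G.Adj z u) (hux : G.Adj u x)
    (hxz : x ≠ z) (hyu : y ≠ u) (L : V → Finset α)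
    (hx : G.degree x ≤ (L x).card) (hz : G.degree z ≤ (L z).card)
    (hy : G.degree y ≤ (L y).card + 1) (hu : G.degree u ≤ (L u).card + 1)
    (h : ∃ φ : ↥({x, y, z, u}ᶜ : Set V) → α,
      IsL1StarColoring (G.induce {x, y, z, u}ᶜ) (fun w => L w) φ) :
    ∃ φ : V → α, IsL1StarColoring G L φ := by
  classical
  set S : Set V := {x, y, z, u}
  obtain ⟨φ, hφ⟩ := h
  let x' : S := ⟨x, by simp [S]⟩
  let y' : S := ⟨y, by simp [S]⟩
  let z' : S := ⟨z, by simp [S]⟩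
  let u' : S := ⟨u, by simp [S]⟩
  have S_eq (v : S) : v = x' ∨ v = y' ∨ v = z' ∨ v = u' :=
    v.2.imp Subtype.ext (Or.imp Subtype.ext (Or.imp Subtype.ext Subtype.ext))
  have card_le {v : S} (hv : G.degree v ≤ (L v).card) :
      (G.induce S).degree v ≤ (residualList G L φ v).card := by
    have := card_add_degree_induce_le (G := G) (L := L) φ v
    omega
  obtain ⟨ψ, hψ⟩ := exists_isL1StarColoring_of_fourCycle S_eq hxy hyz hzu hux
    (Subtype.coe_ne_coe.1 hxz) (Subtype.coe_ne_coe.1 hyu) (card_le (v := x') hx)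
    (card_le (v := z') hz) (residualList_nonempty (s := x') (t := z') φ hxy.symm hyz hxz hy)
    (residualList_nonempty (s := x') (t := z') φ hux hzu.symm hxz hu)
  exact ⟨_, hφ.glue hψ⟩

/-- If `G` contains a 4-cycle `x y z u` (edges `xy`, `yz`, `zu`, `ux`) with
`deg x = deg z = 3`, `deg y = deg u = 4`, all lists have size at least 3, and
`G - {x, y, z, u}` admits an `(L,1)*`-coloring, then so does `G`. -/
theorem stmt_3 {V α : Type*} [Fintype V] [DecidableEq V]
    (G : SimpleGraph V) [DecidableRel G.Adj] (x y z u : V)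
    (hxy : G.Adj x y) (hyz : G.Adj y z) (hzu : G.Adj z u) (hux : G.Adj u x)
    (hxz : x ≠ z) (hyu : y ≠ u)
    (hdx : G.degree x = 3) (hdz : G.degree z = 3)
    (hdy : G.degree y = 4) (hdu : G.degree u = 4)
    (L : V → Finset α) (hL : ∀ w, 3 ≤ (L w).card)
    (h : ∃ φ : {w : V | w ∉ ({x, y, z, u} : Set V)} → α,
      IsL1StarColoring (G.induce {w : V | w ∉ ({x, y, z, u} : Set V)})
        (fun w => L w.1) φ) :
    ∃ φ : V → α, IsL1StarColoring G L φ :=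
  stmt_3_general G x y z u hxy hyz hzu hux hxz hyu L (hdx.trans_le (hL x)) (hdz.trans_le (hL z))
    (hdy.trans_le (Nat.succ_le_succ (hL y))) (hdu.trans_le (Nat.succ_le_succ (hL u))) h
end
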